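/- Specializing the identity Z(w_1 τ(w_2)) = Z(w_1 ⋆ w_2) to w_1 = z_2^{a−1} z_3 z_2^{c−1} and w_2 = z_2^{b−1} z_3 yields ζ({2}^{a−1},3,{2}^{c−1},1,{2}^b) = ζ({2}^{a+b+c}) + ζ({2}^{a−1},3,{2}^{b−1},3,{2}^{c−1}) + ζ({2}^{b−1},3,{2}^{a−1},3,{2}^{c−1}); in particular, as an identity in H^{2,3}, z_2^{a−1} z_3 z_2^{c−1} ⋆ z_2^{b−1} z_3 = z_2^{a+b+c} + z_2^{a−1} z_3 z_2^{b−1} z_3 z_2^{c−1} + z_2^{b−1} z_3 z_2^{a−1} z_3 z_2^{c−1}. -/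

import Mathlib

/-- A word in `ℤ⟨z₂,z₃⟩`, recorded as its list of indices (each `2` or `3`). -/
def IsWord23 (w : List ℕ) : Prop := ∀ k ∈ w, k = 2 ∨ k = 3

/-- Auxiliary star product on *reversed* words (the head of the list is the rightmost
letter `z_k` of the word), with values in the free `ℤ`-module on reversed words. -/
noncomputable def starAux : List ℕ → List ℕ → (List ℕ →₀ ℤ)
  | [], v => Finsupp.single v 1
  | u, [] => Finsupp.single u 1
  | 2 :: u, v => Finsupp.mapDomain (2 :: ·) (starAux u v)
  | u, 2 :: v => Finsupp.mapDomain (2 :: ·) (starAux u v)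
  | 3 :: u, 3 :: v =>
      Finsupp.mapDomain (3 :: ·) (starAux u (3 :: v)) +
      Finsupp.mapDomain (3 :: ·) (starAux (3 :: u) v) +
      Finsupp.mapDomain (fun l => 2 :: 2 :: 2 :: l) (starAux u v)
  | _, _ => 0
termination_by u v => u.length + v.length

/-- The star product of two words of `ℤ⟨z₂,z₃⟩` (written in natural left-to-right order),
as a `ℤ`-linear combination of words. -/
noncomputable def starW (u v : List ℕ) : List ℕ →₀ ℤ :=
  Finsupp.mapDomain List.reverse (starAux u.reverse v.reverse)

/-- The `ℤ`-bilinear extension of the star product to the free `ℤ`-module on words. -/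
noncomputable def starHS : (List ℕ →₀ ℤ) →ₗ[ℤ] (List ℕ →₀ ℤ) →ₗ[ℤ] (List ℕ →₀ ℤ) :=
  Finsupp.lsum ℤ fun u => LinearMap.toSpanSingleton ℤ _
    (Finsupp.lsum ℤ fun v => LinearMap.toSpanSingleton ℤ _ (starW u v))

/-- The multiple zeta value `ζ(k₁,…,k_r)`. -/
noncomputable def mzv (ks : List ℕ) : ℝ :=
  ∑' n : Fin ks.length → ℕ,
    if (∀ i j : Fin ks.length, i < j → n i < n j) ∧ (∀ i, 0 < n i) then
      ∏ i, (1 : ℝ) / (n i : ℝ) ^ ks.get i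
    else 0

/-!
The proof uses connected sums: sums of `K(n_r, m_s, L) / (∏ n_i ^ k_i * ∏ m_j ^ l_j)` over two
chains `0 < n_1 < ⋯ < n_r` and `0 < m_1 < ⋯ < m_s`, one for each of the two words. The connector
`K(n, m, l)` is the indicator of `n < l` at `m = 0`, and its difference quotients in `n`, `m` and
`l` all agree up to elementary factors. As a function of `l`, a connected sum therefore satisfies
the recursion that defines the `⋆`-product: a letter `z_2` on either side can be traded for a
summation over `l < L`, and a pair of letters `z_3` for the three terms of `z_3 ⋆ z_3`, which come
from writing `l = (l - n - m) + n + m`. So the connected sum of two words is a truncated multiple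
zeta value of their `⋆`-product. At `L = ∞` the connector becomes `n! m! / (n + m)!`, which moves
letters from one chain to the other through the duality `τ`, and the same sum is
`ζ(w₁ τ(w₂))`.
-/

open scoped ENNReal

section StarProduct

lemma starAux_nil_left (v : List ℕ) : starAux [] v = Finsupp.single v 1 := by
  rw [starAux]

lemma starAux_nil_right (u : List ℕ) : starAux u [] = Finsupp.single u 1 := by
  cases u <;> rw [starAux]
  simp

lemma starAux_two_cons_left (u v : List ℕ) :
    starAux (2 :: u) v = Finsupp.mapDomain (2 :: ·) (starAux u v) := by
  cases v with
  | nil => rw [starAux_nil_right, starAux_nil_right, Finsupp.mapDomain_single]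
  | cons x v => rw [starAux]; simp

lemma starAux_two_cons_right (u v : List ℕ) :
    starAux u (2 :: v) = Finsupp.mapDomain (2 :: ·) (starAux u v) := by
  induction u with
  | nil => rw [starAux_nil_left, starAux_nil_left, Finsupp.mapDomain_single]
  | cons k u ih =>
    rcases eq_or_ne k 2 with rfl | hk
    · rw [starAux_two_cons_left, starAux_two_cons_left, ih]
    · rw [starAux] <;> simp [hk]

lemma starAux_three_cons_three_cons (u v : List ℕ) :
    starAux (3 :: u) (3 :: v) = Finsupp.mapDomain (3 :: ·) (starAux u (3 :: v)) +
      Finsupp.mapDomain (3 :: ·) (starAux (3 :: u) v) +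
      Finsupp.mapDomain (fun l => 2 :: 2 :: 2 :: l) (starAux u v) := by
  rw [starAux]

lemma starAux_replicate_two_append_left (p : ℕ) (u v : List ℕ) :
    starAux (List.replicate p 2 ++ u) v
      = Finsupp.mapDomain (List.replicate p 2 ++ ·) (starAux u v) := by
  induction p with
  | zero => exact Finsupp.mapDomain_id.symm
  | succ p ih =>
    rw [List.replicate_succ, List.cons_append, starAux_two_cons_left, ih,
      ← Finsupp.mapDomain_comp]
    rfl

lemma starAux_replicate_two_left (p : ℕ) (v : List ℕ) :
    starAux (List.replicate p 2) v = Finsupp.single (List.replicate p 2 ++ v) 1 := by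
  simpa [starAux_nil_left] using starAux_replicate_two_append_left p [] v

lemma starAux_replicate_two_right (u : List ℕ) (p : ℕ) :
    starAux u (List.replicate p 2) = Finsupp.single (List.replicate p 2 ++ u) 1 := by
  induction p with
  | zero => exact starAux_nil_right u
  | succ p ih =>
    rw [List.replicate_succ, starAux_two_cons_right, ih, Finsupp.mapDomain_single]
    rfl

lemma starW_replicate_three_replicate (a b c : ℕ) :
    starW (List.replicate a 2 ++ [3] ++ List.replicate c 2) (List.replicate b 2 ++ [3])
      = Finsupp.single (List.replicate (a + 1 + (b + 1) + (c + 1)) 2) 1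
        + Finsupp.single (List.replicate a 2 ++ [3] ++ List.replicate b 2
            ++ [3] ++ List.replicate c 2) 1
        + Finsupp.single (List.replicate b 2 ++ [3] ++ List.replicate a 2
            ++ [3] ++ List.replicate c 2) 1 := by
  have h_twos : List.replicate (a + 1 + (b + 1) + (c + 1)) 2
      = List.replicate a 2 ++ (List.replicate b 2 ++ 2 :: 2 :: 2 :: List.replicate c 2) := by
    simp only [← List.replicate_succ, List.replicate_append_replicate]
    congr 1
    omega
  unfold starW
  simp only [List.reverse_append, List.reverse_replicate, List.reverse_singleton,
    List.singleton_append, starAux_replicate_two_append_left, starAux_three_cons_three_cons,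
    starAux_replicate_two_left, starAux_replicate_two_right, Finsupp.mapDomain_add,
    Finsupp.mapDomain_single, h_twos]
  simp only [List.reverse_append, List.reverse_replicate, List.reverse_cons,
    List.append_assoc, List.nil_append, List.cons_append]
  abel

end StarProduct

section HarmonicSum

/-- The sum `∑_{a < i < b} f i / i ^ k`, the building block of multiple zeta values and of
connected sums. -/
noncomputable def harmonicSum (k a : ℕ) (b : ℕ∞) (f : ℕ → ℝ≥0∞) : ℝ≥0∞ :=
  ∑' i : {i : ℕ | a < i ∧ (i : ℕ∞) < b}, f i / (i : ℝ≥0∞) ^ k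

variable {k a : ℕ} {b : ℕ∞} {f g : ℕ → ℝ≥0∞}

lemma harmonicSum_congr (h : ∀ i, a < i → (i : ℕ∞) < b → f i = g i) :
    harmonicSum k a b f = harmonicSum k a b g :=
  tsum_congr fun i => by rw [h i i.2.1 i.2.2]

lemma harmonicSum_zero : harmonicSum k a b 0 = 0 := by
  simp [harmonicSum]

lemma harmonicSum_add :
    harmonicSum k a b (f + g) = harmonicSum k a b f + harmonicSum k a b g := by
  simp only [harmonicSum, Pi.add_apply, ENNReal.add_div, ENNReal.tsum_add]

lemma harmonicSum_const_mul (c : ℝ≥0∞) :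
    harmonicSum k a b (fun i => c * f i) = c * harmonicSum k a b f := by
  simp only [harmonicSum, mul_div_assoc, ENNReal.tsum_mul_left]

lemma harmonicSum_comm (k' a' : ℕ) (b' : ℕ∞) (F : ℕ → ℕ → ℝ≥0∞) :
    harmonicSum k a b (fun i => harmonicSum k' a' b' fun j => F i j)
      = harmonicSum k' a' b' fun j => harmonicSum k a b fun i => F i j := by
  simp only [harmonicSum, div_eq_mul_inv, ← ENNReal.tsum_mul_right]
  rw [ENNReal.tsum_comm]
  simp only [mul_right_comm]

lemma harmonicSum_succ_of_eq_mul (h : ∀ i, a < i → (i : ℕ∞) < b → g i = i * f i) :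
    harmonicSum (k + 1) a b g = harmonicSum k a b f := by
  refine tsum_congr fun ⟨i, hai, hib⟩ => ?_
  have hi : (i : ℝ≥0∞) ≠ 0 := by exact_mod_cast (Nat.zero_le a).trans_lt hai |>.ne'
  rw [h i hai hib, pow_succ', ENNReal.mul_div_mul_left _ _ hi (ENNReal.natCast_ne_top i)]

lemma harmonicSum_eq_tsum_ite :
    harmonicSum k a b f
      = ∑' i : ℕ, if a < i ∧ (i : ℕ∞) < b then f i / (i : ℝ≥0∞) ^ k else 0 := by
  rw [harmonicSum, tsum_subtype _ fun i : ℕ => f i / (i : ℝ≥0∞) ^ k]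
  simp only [Set.indicator, Set.mem_ofPred_eq]

end HarmonicSum

section MzvTail

/-- The tail `∑_{a < n₁ < ⋯ < n_r} 1 / (n₁ ^ k₁ ⋯ n_r ^ k_r)` of a multiple zeta value, with
values in `ℝ≥0∞` so that it makes sense for divergent indices too. -/
noncomputable def mzvTail : List ℕ → ℕ → ℝ≥0∞
  | [], _ => 1
  | k :: ks, a => harmonicSum k a ⊤ (mzvTail ks)

lemma strictMono_cons_and_forall_lt_iff {r a m : ℕ} {n : Fin r → ℕ} :
    ((∀ i j, i < j → (Fin.cons m n : Fin (r + 1) → ℕ) i < (Fin.cons m n : Fin (r + 1) → ℕ) j) ∧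
        ∀ i, a < (Fin.cons m n : Fin (r + 1) → ℕ) i)
      ↔ a < m ∧ (∀ i j, i < j → n i < n j) ∧ ∀ i, m < n i := by
  simp only [Fin.forall_fin_succ, Fin.cons_zero, Fin.cons_succ, Fin.succ_lt_succ_iff,
    Fin.succ_pos, Fin.not_lt_zero, false_imp_iff, true_imp_iff, true_and]
  grind

lemma tsum_strictMono_eq_mzvTail (ks : List ℕ) (a : ℕ) :
    ∑' n : Fin ks.length → ℕ,
      (if (∀ i j, i < j → n i < n j) ∧ ∀ i, a < n i then
        ∏ i, 1 / (n i : ℝ≥0∞) ^ ks.get i else 0) = mzvTail ks a := by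
  induction ks generalizing a with
  | nil => simp [mzvTail]
  | cons k ks ih =>
    refine ((Fin.consEquiv fun _ : Fin (ks.length + 1) => ℕ).tsum_eq _).symm.trans ?_
    rw [ENNReal.tsum_prod', mzvTail, harmonicSum_eq_tsum_ite]
    refine tsum_congr fun m => ?_
    simp only [Fin.consEquiv_apply, List.length_cons, strictMono_cons_and_forall_lt_iff,
      ENat.natCast_lt_top, and_true, Fin.prod_univ_succ, ← ih m]
    by_cases ham : a < m
    · simp [ham, ENNReal.div_eq_inv_mul, ← ENNReal.tsum_mul_left]
    · simp [ham]

lemma mzv_eq_toReal_mzvTail (ks : List ℕ) : mzv ks = (mzvTail ks 0).toReal := by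
  rw [← tsum_strictMono_eq_mzvTail, ENNReal.tsum_toReal_eq]
  · refine tsum_congr fun n => ?_
    split_ifs <;> simp [ENNReal.toReal_prod]
  · intro n
    split_ifs with hn
    · refine ENNReal.prod_ne_top fun i _ => ENNReal.div_ne_top ENNReal.one_ne_top ?_
      simpa using fun h : n i = 0 => absurd (hn.2 i) h.not_gt
    · exact ENNReal.zero_ne_top

lemma mzvTail_le_prod (ks : List ℕ) (a : ℕ) :
    mzvTail ks a ≤ (ks.map fun k => harmonicSum k 0 ⊤ 1).prod := by
  induction ks generalizing a with
  | nil => exact le_rfl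
  | cons k ks ih =>
    rw [mzvTail, List.map_cons, List.prod_cons, harmonicSum_eq_tsum_ite,
      harmonicSum_eq_tsum_ite (f := 1), ← ENNReal.tsum_mul_right]
    refine ENNReal.tsum_le_tsum fun i => ?_
    split_ifs with hai hi
    · rw [ENNReal.div_eq_inv_mul, Pi.one_apply, one_div]
      exact mul_le_mul_right (ih i) _
    · exact absurd ⟨(Nat.zero_le a).trans_lt hai.1, hai.2⟩ hi
    · exact zero_le
    · exact zero_le

lemma harmonicSum_one_ne_top {k : ℕ} (hk : 2 ≤ k) : harmonicSum k 0 ⊤ 1 ≠ ⊤ := by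
  have h_summable : Summable fun i : ℕ => 1 / (i : ℝ) ^ k := Real.summable_one_div_nat_pow.2 hk
  refine ne_top_of_le_ne_top h_summable.tsum_ofReal_ne_top ?_
  rw [harmonicSum_eq_tsum_ite]
  refine ENNReal.tsum_le_tsum fun i => ?_
  split_ifs with hi
  · have : (0 : ℝ) < i := by exact_mod_cast hi.1
    rw [ENNReal.ofReal_div_of_pos (by positivity)]
    simp
  · exact zero_le

lemma mzvTail_ne_top {ks : List ℕ} (hks : ∀ k ∈ ks, 2 ≤ k) (a : ℕ) : mzvTail ks a ≠ ⊤ := by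
  refine ne_top_of_le_ne_top ?_ (mzvTail_le_prod ks a)
  induction ks with
  | nil => simp
  | cons k ks ih =>
    rw [List.forall_mem_cons] at hks
    exact ENNReal.mul_ne_top (harmonicSum_one_ne_top hks.1) (ih hks.2)

end MzvTail

section Telescoping

open Filter
open scoped Topology

variable {k : ℕ} {f d : ℕ → ℝ≥0∞}

lemma harmonicSum_natCast (k a b : ℕ) (f : ℕ → ℝ≥0∞) :
    harmonicSum k a b f
      = ∑ i ∈ Finset.range b, if a < i then f i / (i : ℝ≥0∞) ^ k else 0 := by
  rw [harmonicSum_eq_tsum_ite, tsum_eq_sum (s := Finset.range b)]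
  · exact Finset.sum_congr rfl fun i hi => by simp [Finset.mem_range.1 hi]
  · intro i hi
    exact if_neg fun h => hi (Finset.mem_range.2 (by exact_mod_cast h.2))

lemma tendsto_harmonicSum_natCast (k a : ℕ) (f : ℕ → ℝ≥0∞) :
    Tendsto (fun b : ℕ => harmonicSum k a b f) atTop (𝓝 (harmonicSum k a ⊤ f)) := by
  rw [harmonicSum_eq_tsum_ite]
  simp only [harmonicSum_natCast, ENat.natCast_lt_top, and_true]
  exact ENNReal.tendsto_nat_tsum _

lemma harmonicSum_top_eq_tsum_add (k a : ℕ) (f : ℕ → ℝ≥0∞) :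
    harmonicSum k a ⊤ f = ∑' i : ℕ, f (i + a + 1) / ((i + a + 1 : ℕ) : ℝ≥0∞) ^ k := by
  rw [harmonicSum_eq_tsum_ite,
    ← Summable.sum_add_tsum_nat_add' (k := a + 1) ENNReal.summable, Finset.sum_eq_zero, zero_add]
  · exact tsum_congr fun i => if_pos ⟨by lia, ENat.natCast_lt_top _⟩
  · intro i hi
    exact if_neg fun h => (Finset.mem_range.1 hi).not_ge h.1

lemma eq_harmonicSum_top_of_tendsto_zero (hf : Tendsto f atTop (𝓝 0))
    (h : ∀ i, f i = f (i + 1) + d (i + 1) / ((i + 1 : ℕ) : ℝ≥0∞) ^ k) (a : ℕ) :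
    f a = harmonicSum k a ⊤ d := by
  set D : ℕ → ℝ≥0∞ := fun i => d (i + a + 1) / ((i + a + 1 : ℕ) : ℝ≥0∞) ^ k
  have h_partial (j : ℕ) : f a = f (j + a) + ∑ i ∈ Finset.range j, D i := by
    induction j with
    | zero => simp
    | succ j ih =>
      rw [ih, h, Finset.sum_range_succ, add_assoc, add_comm (D j), add_right_comm j a 1]
  have h_lim : Tendsto (fun j => f (j + a) + ∑ i ∈ Finset.range j, D i) atTop
      (𝓝 (0 + ∑' i, D i)) :=
    ((tendsto_add_atTop_iff_nat a).2 hf).add (ENNReal.tendsto_nat_tsum D)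
  rw [harmonicSum_top_eq_tsum_add, ← zero_add (tsum _)]
  exact tendsto_nhds_unique tendsto_const_nhds (h_lim.congr fun j => (h_partial j).symm)

lemma eq_harmonicSum_natCast (h_zero : f 0 = 0) (h_one : f 1 = 0)
    (h : ∀ i, 0 < i → f (i + 1) = f i + d i / (i : ℝ≥0∞) ^ k) (b : ℕ) :
    f b = harmonicSum k 0 b d := by
  rw [harmonicSum_natCast]
  induction b with
  | zero => simpa using h_zero
  | succ b ih =>
    rw [Finset.sum_range_succ, ← ih]
    rcases b.eq_zero_or_pos with rfl | hb
    · simp [h_zero, h_one]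
    · rw [h b hb, if_pos hb]

end Telescoping

section Connector

open Filter
open scoped NNReal Nat Topology

/-- The connector `K(n, m, l)`: it interpolates between the truncation `[n < l]` at `m = 0` and
Seki and Yamamoto's duality connector `n! m! / (n + m)!` at `l = ∞`. It vanishes, as `0 / 0`, for
`0 < l ≤ n` or `0 < l ≤ m`; at `l = 0` truncated subtraction makes it agree with `l = 1`. -/
noncomputable def connector (n m : ℕ) (L : ℕ∞) : ℝ≥0 :=
  L.recTopCoe (1 / (n + m).choose n) fun l =>
    (l - 1).choose (n + m) / ((l - 1).choose n * (l - 1).choose m)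

/-- The difference of the connector `K` in any of its three arguments, normalised so that
`K(n, m, l + 1) - K(n, m, l)` is `n m / l ^ 2` times it. -/
noncomputable def connectorDiff (n m : ℕ) (L : ℕ∞) : ℝ≥0 :=
  L.recTopCoe (1 / (n + m).choose n) fun l =>
    l.choose (n + m) / ((l - 1).choose n * (l - 1).choose m)

variable {n m : ℕ}

lemma connector_top (n m : ℕ) : connector n m ⊤ = 1 / (n + m).choose n := rfl

lemma connectorDiff_top (n m : ℕ) : connectorDiff n m ⊤ = connector n m ⊤ := rfl

lemma connector_natCast (n m l : ℕ) :
    connector n m l = (l - 1).choose (n + m) / ((l - 1).choose n * (l - 1).choose m) := rfl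

lemma connectorDiff_natCast (n m l : ℕ) :
    connectorDiff n m l = l.choose (n + m) / ((l - 1).choose n * (l - 1).choose m) := rfl

lemma connector_comm (n m : ℕ) (L : ℕ∞) : connector n m L = connector m n L := by
  cases L with
  | top => rw [connector_top, connector_top, Nat.choose_symm_add, add_comm]
  | coe l => simp only [connector_natCast, add_comm, mul_comm]

lemma connectorDiff_comm (n m : ℕ) (L : ℕ∞) : connectorDiff n m L = connectorDiff m n L := by
  cases L with
  | top => exact connector_comm n m ⊤
  | coe l => simp only [connectorDiff_natCast, add_comm, mul_comm]

lemma connector_natCast_eq_zero {l : ℕ} (hl : l ≤ n + m) (hm : 0 < m) :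
    connector n m l = 0 := by
  rw [connector_natCast, Nat.choose_eq_zero_of_lt (by lia), Nat.cast_zero, zero_div]

lemma cast_choose_ne_zero {N k : ℕ} (h : k ≤ N) : (N.choose k : ℝ≥0) ≠ 0 := by
  exact_mod_cast (Nat.choose_pos h).ne'

lemma connector_zero_right {L : ℕ∞} (h : n ≠ 0 ∨ L ≠ 0) :
    connector n 0 L = if (n : ℕ∞) < L then 1 else 0 := by
  cases L with
  | top => simp [connector_top]
  | coe l =>
    simp only [connector_natCast, add_zero, Nat.choose_zero_right, Nat.cast_one, mul_one,
      Nat.cast_lt]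
    split_ifs with hn
    · exact div_self (cast_choose_ne_zero (Nat.le_sub_one_of_lt hn))
    · rw [Nat.choose_eq_zero_of_lt, Nat.cast_zero, zero_div]
      rw [Nat.cast_ne_zero] at h
      lia

lemma connectorDiff_natCast_eq_zero {l : ℕ} (hl : l < n + m) : connectorDiff n m l = 0 := by
  rw [connectorDiff_natCast, Nat.choose_eq_zero_of_lt hl, Nat.cast_zero, zero_div]

lemma connector_top_eq_succ_add (n m : ℕ) :
    connector n m ⊤ = connector (n + 1) m ⊤ + m * connectorDiff (n + 1) m ⊤ / (n + 1) := by
  have h_choose : (n + 1 + m : ℝ≥0) * (n + m).choose n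
      = (n + 1 + m).choose (n + 1) * (n + 1) := by
    have := Nat.add_one_mul_choose_eq (n + m) n
    rw [add_right_comm] at this
    exact_mod_cast this
  have h₀ := cast_choose_ne_zero (Nat.le_add_right n m)
  have h₁ := cast_choose_ne_zero (Nat.le_add_right (n + 1) m)
  rw [connectorDiff_top, connector_top, connector_top]
  field_simp
  linear_combination -h_choose

lemma connector_natCast_eq_succ_add (hm : 0 < m) (n l : ℕ) :
    connector n m l = connector (n + 1) m l + m * connectorDiff (n + 1) m l / (n + 1) := by
  rcases le_or_gt l (n + m) with hl | hl
  · rw [connector_natCast_eq_zero hl hm, connector_natCast_eq_zero (by lia) hm,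
      connectorDiff_natCast_eq_zero (by lia), mul_zero, zero_div, zero_add]
  obtain ⟨d, rfl⟩ : ∃ d, l = n + m + d + 1 := Nat.exists_eq_add_of_lt hl
  simp only [connector_natCast, connectorDiff_natCast, Nat.add_sub_cancel, add_right_comm n 1 m]
  have h₁ := cast_choose_ne_zero (by lia : n ≤ n + m + d)
  have h₂ := cast_choose_ne_zero (by lia : n + 1 ≤ n + m + d)
  have h₃ := cast_choose_ne_zero (by lia : m ≤ n + m + d)
  have h_n : ((n + m + d).choose (n + 1) * (n + 1) : ℝ≥0) = (n + m + d).choose n * (m + d) := by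
    have := Nat.choose_succ_right_eq (n + m + d) n
    rw [show n + m + d - n = m + d by lia] at this
    exact_mod_cast this
  have h_nm : ((n + m + d).choose (n + m + 1) * (n + m + 1) : ℝ≥0)
      = (n + m + d).choose (n + m) * d := by
    have := Nat.choose_succ_right_eq (n + m + d) (n + m)
    rw [Nat.add_sub_cancel_left] at this
    exact_mod_cast this
  rw [Nat.choose_succ_succ, Nat.cast_add]
  field_simp
  linear_combination ((n + m + d).choose (n + m) : ℝ≥0) * h_n
    - ((n + m + d).choose n : ℝ≥0) * h_nm

lemma connector_eq_succ_add (hm : 0 < m) (n : ℕ) (L : ℕ∞) :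
    connector n m L = connector (n + 1) m L + m * connectorDiff (n + 1) m L / (n + 1) := by
  cases L with
  | top => exact connector_top_eq_succ_add n m
  | coe l => exact connector_natCast_eq_succ_add hm n l

lemma cast_choose_eq_succ_choose_mul_div {N k c : ℕ} (h : N + 1 = k + c) :
    (N.choose k : ℝ≥0) = (N + 1).choose k * c / (N + 1) := by
  have := Nat.choose_mul_succ_eq N k
  rw [show N + 1 - k = c by lia] at this
  rw [eq_div_iff (by positivity)]
  exact_mod_cast this

lemma connector_natCast_succ (hn : 0 < n) (hm : 0 < m) {l : ℕ} (hl : 0 < l) :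
    connector n m (l + 1 : ℕ) = connector n m l + n * m * connectorDiff n m l / l ^ 2 := by
  rcases lt_or_ge l (n + m) with hlt | hle
  · rw [connector_natCast_eq_zero hlt hm, connector_natCast_eq_zero hlt.le hm,
      connectorDiff_natCast_eq_zero hlt, mul_zero, zero_div, zero_add]
  obtain ⟨N, rfl⟩ := Nat.exists_eq_succ_of_ne_zero hl.ne'
  obtain ⟨d, hd⟩ := Nat.exists_eq_add_of_le hle
  have h_cast : (N + 1 : ℝ≥0) = n + m + d := by exact_mod_cast hd
  have h₁ := cast_choose_ne_zero (by lia : n ≤ N + 1)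
  have h₂ := cast_choose_ne_zero (by lia : m ≤ N + 1)
  rw [connector_natCast, connector_natCast, connectorDiff_natCast]
  simp only [Nat.succ_eq_add_one, Nat.add_sub_cancel,
    cast_choose_eq_succ_choose_mul_div (by lia : N + 1 = n + (m + d)),
    cast_choose_eq_succ_choose_mul_div (by lia : N + 1 = m + (n + d)),
    cast_choose_eq_succ_choose_mul_div hd, Nat.cast_add, Nat.cast_one, h_cast]
  field_simp
  ring

lemma natCast_mul_connectorDiff (n m : ℕ) {l : ℕ} (hl : 0 < l) :
    l * connectorDiff n m l = l * connector n m l + (n + m) * connectorDiff n m l := by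
  obtain ⟨N, rfl⟩ := Nat.exists_eq_succ_of_ne_zero hl.ne'
  simp only [connector_natCast, connectorDiff_natCast, Nat.succ_eq_add_one, Nat.add_sub_cancel]
  rcases lt_or_ge (N + 1) (n + m) with hlt | hle
  · simp [Nat.choose_eq_zero_of_lt hlt, Nat.choose_eq_zero_of_lt (N.lt_succ_self.trans hlt)]
  obtain ⟨d, hd⟩ := Nat.exists_eq_add_of_le hle
  have h_cast : (N + 1 : ℝ≥0) = n + m + d := by exact_mod_cast hd
  simp only [cast_choose_eq_succ_choose_mul_div hd, Nat.cast_add_one, ← mul_div_assoc, ← add_div]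
  congr 1
  field_simp
  rw [h_cast]
  ring

lemma tendsto_connector_natCast (n m : ℕ) :
    Tendsto (fun l : ℕ => connector n m l) atTop (𝓝 (connector n m ⊤)) := by
  have h_equiv := (isEquivalent_choose (n + m)).div
    ((isEquivalent_choose n).mul (isEquivalent_choose m))
  have h_pow : (fun N : ℕ => (N ^ (n + m) / (n + m)! : ℝ) / (N ^ n / n ! * (N ^ m / m !)))
      =ᶠ[atTop] fun _ => (connector n m ⊤ : ℝ) := by
    filter_upwards [eventually_gt_atTop 0] with N hN
    rw [connector_top, ← Nat.add_choose_mul_factorial_mul_factorial n m, pow_add]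
    push_cast
    field_simp
    rw [Nat.choose_symm_add]
  rw [← tendsto_add_atTop_iff_nat 1, ← NNReal.tendsto_coe]
  refine ((h_equiv.trans_eventuallyEq h_pow).tendsto_const).congr fun l => ?_
  rw [connector_natCast]
  simp

lemma tendsto_connector_atTop (hm : 0 < m) (L : ℕ∞) :
    Tendsto (fun n => connector n m L) atTop (𝓝 0) := by
  cases L with
  | top =>
    refine tendsto_of_tendsto_of_tendsto_of_le_of_le tendsto_const_nhds
      tendsto_one_div_add_atTop_nhds_zero_nat (fun n => zero_le) fun n => ?_
    have h_le : n + 1 ≤ (n + m).choose n := by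
      simpa using Nat.choose_le_choose n (Nat.add_le_add_left (Nat.succ_le_of_lt hm) n)
    rw [connector_top]
    gcongr
    exact_mod_cast h_le
  | coe l =>
    refine tendsto_const_nhds.congr' ?_
    filter_upwards [eventually_ge_atTop l] with n hn
    exact (connector_natCast_eq_zero (hn.trans (Nat.le_add_right n m)) hm).symm

lemma connector_eq_mul_harmonicSum (hm : 0 < m) (n : ℕ) (L : ℕ∞) :
    (connector n m L : ℝ≥0∞) = m * harmonicSum 1 n ⊤ fun i => connectorDiff i m L := by
  rw [← harmonicSum_const_mul]
  refine eq_harmonicSum_top_of_tendsto_zero (f := fun n => (connector n m L : ℝ≥0∞))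
    (ENNReal.tendsto_coe.2 (tendsto_connector_atTop hm L)) (fun i => ?_) n
  rw [connector_eq_succ_add hm, pow_one, ENNReal.coe_add, ENNReal.coe_div (by positivity)]
  push_cast
  rfl

lemma connector_eq_mul_mul_harmonicSum (hn : 0 < n) (hm : 0 < m) (L : ℕ∞) :
    (connector n m L : ℝ≥0∞) = n * m * harmonicSum 2 0 L fun l => connectorDiff n m l := by
  rw [← harmonicSum_const_mul]
  have h_natCast (l : ℕ) : (connector n m l : ℝ≥0∞)
      = harmonicSum 2 0 l fun l => n * m * connectorDiff n m l := by
    refine eq_harmonicSum_natCast (f := fun l : ℕ => (connector n m l : ℝ≥0∞)) ?_ ?_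
      (fun i hi => ?_) l
    · rw [connector_natCast_eq_zero (by lia) hm, ENNReal.coe_zero]
    · rw [connector_natCast_eq_zero (by lia) hm, ENNReal.coe_zero]
    · rw [connector_natCast_succ hn hm hi, ENNReal.coe_add, ENNReal.coe_div (by positivity)]
      push_cast
      rfl
  cases L with
  | top =>
    refine tendsto_nhds_unique (ENNReal.tendsto_coe.2 (tendsto_connector_natCast n m)) ?_
    simp only [h_natCast]
    exact tendsto_harmonicSum_natCast 2 0 _
  | coe l => exact h_natCast l

end Connector

section SumOperators

variable (j k : ℕ) (f : ℕ → ℕ → ℕ∞ → ℝ≥0∞)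

/-- The operator `f(n, m, L) ↦ ∑_{i > n} f(i, m, L) / i ^ k`. -/
noncomputable def sumLeft : AddMonoid.End (ℕ → ℕ → ℕ∞ → ℝ≥0∞) where
  toFun f n m L := harmonicSum k n ⊤ fun i => f i m L
  map_zero' := funext₃ fun _ _ _ => harmonicSum_zero
  map_add' _ _ := funext₃ fun _ _ _ => harmonicSum_add

/-- The operator `f(n, m, L) ↦ ∑_{i > m} f(n, i, L) / i ^ k`. -/
noncomputable def sumRight : AddMonoid.End (ℕ → ℕ → ℕ∞ → ℝ≥0∞) where
  toFun f n m L := harmonicSum k m ⊤ fun i => f n i L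
  map_zero' := funext₃ fun _ _ _ => harmonicSum_zero
  map_add' _ _ := funext₃ fun _ _ _ => harmonicSum_add

/-- The truncated sum `L ↦ ∑_{0 < l < L} f l / l ^ k`. -/
noncomputable def truncSum : AddMonoid.End (ℕ∞ → ℝ≥0∞) where
  toFun f L := harmonicSum k 0 L fun l => f l
  map_zero' := funext fun _ => harmonicSum_zero
  map_add' _ _ := funext fun _ => harmonicSum_add

/-- The operator `f(n, m, L) ↦ ∑_{0 < l < L} f(n, m, l) / l ^ k`. -/
noncomputable def sumTrunc : AddMonoid.End (ℕ → ℕ → ℕ∞ → ℝ≥0∞) where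
  toFun f n m := truncSum k (f n m)
  map_zero' := funext₂ fun _ _ => map_zero (truncSum k)
  map_add' _ _ := funext₂ fun _ _ => map_add (truncSum k) _ _

variable (n m : ℕ) (L : ℕ∞)

lemma sumLeft_apply : sumLeft k f n m L = harmonicSum k n ⊤ fun i => f i m L := rfl

lemma sumRight_apply : sumRight k f n m L = harmonicSum k m ⊤ fun i => f n i L := rfl

lemma sumTrunc_apply : sumTrunc k f n m L = harmonicSum k 0 L fun l => f n m l := rfl

lemma sumLeft_comm_sumRight : sumLeft j (sumRight k f) = sumRight k (sumLeft j f) := by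
  refine funext₃ fun n m L => ?_
  simp only [sumLeft_apply, sumRight_apply]
  exact harmonicSum_comm ..

lemma sumLeft_comm_sumTrunc : sumLeft j (sumTrunc k f) = sumTrunc k (sumLeft j f) := by
  refine funext₃ fun n m L => ?_
  simp only [sumLeft_apply, sumTrunc_apply]
  exact harmonicSum_comm ..

lemma sumRight_comm_sumTrunc : sumRight j (sumTrunc k f) = sumTrunc k (sumRight j f) := by
  refine funext₃ fun n m L => ?_
  simp only [sumRight_apply, sumTrunc_apply]
  exact harmonicSum_comm ..

lemma sumLeft_succ_natCast_mul :
    sumLeft (k + 1) (fun n m L => n * f n m L) = sumLeft k f := by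
  refine funext₃ fun n m L => ?_
  rw [sumLeft_apply, sumLeft_apply]
  exact harmonicSum_succ_of_eq_mul fun _ _ _ => rfl

lemma sumRight_succ_natCast_mul :
    sumRight (k + 1) (fun n m L => m * f n m L) = sumRight k f := by
  refine funext₃ fun n m L => ?_
  rw [sumRight_apply, sumRight_apply]
  exact harmonicSum_succ_of_eq_mul fun _ _ _ => rfl

lemma sumRight_natCast_mul :
    sumRight k (fun n m L => n * f n m L) = fun n m L => n * sumRight k f n m L := by
  simp only [funext_iff, sumRight_apply, harmonicSum_const_mul, implies_true]

end SumOperators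

section Transport

/-- The connector as a function with values in `ℝ≥0∞`, on which the summation operators act. -/
noncomputable def connectorFun (n m : ℕ) (L : ℕ∞) : ℝ≥0∞ := connector n m L

/-- The normalised difference of the connector, with values in `ℝ≥0∞`. -/
noncomputable def connectorDiffFun (n m : ℕ) (L : ℕ∞) : ℝ≥0∞ := connectorDiff n m L

variable (j k : ℕ)

lemma sumRight_succ_connectorFun :
    sumRight (k + 1) connectorFun = sumLeft 1 (sumRight k connectorDiffFun) := by
  rw [sumLeft_comm_sumRight]
  refine funext₃ fun n m L => ?_
  rw [sumRight_apply, sumRight_apply]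
  exact harmonicSum_succ_of_eq_mul fun i hi _ =>
    connector_eq_mul_harmonicSum (Nat.zero_lt_of_lt hi) n L

lemma sumLeft_succ_connectorFun :
    sumLeft (k + 1) connectorFun = sumRight 1 (sumLeft k connectorDiffFun) := by
  rw [← sumLeft_comm_sumRight]
  refine funext₃ fun n m L => ?_
  rw [sumLeft_apply, sumLeft_apply]
  refine harmonicSum_succ_of_eq_mul fun i hi _ => ?_
  simp only [connectorFun, sumRight_apply, connectorDiffFun]
  rw [connector_comm, connector_eq_mul_harmonicSum (Nat.zero_lt_of_lt hi)]
  simp only [connectorDiff_comm _ i]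

lemma sumLeft_two_connectorFun_eq_sumRight :
    sumLeft 2 connectorFun = sumRight 2 connectorFun := by
  rw [sumLeft_succ_connectorFun, sumRight_succ_connectorFun, sumLeft_comm_sumRight]

lemma sumLeft_succ_sumRight_succ_connectorFun :
    sumLeft (j + 1) (sumRight (k + 1) connectorFun)
      = sumLeft j (sumRight k (sumTrunc 2 connectorDiffFun)) := by
  refine funext₃ fun n m L => ?_
  rw [sumLeft_apply, sumLeft_apply]
  refine harmonicSum_succ_of_eq_mul fun p hp _ => ?_
  rw [sumRight_apply, sumRight_apply, ← harmonicSum_const_mul]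
  refine harmonicSum_succ_of_eq_mul fun q hq _ => ?_
  simp only [connectorFun, sumTrunc_apply, connectorDiffFun]
  rw [connector_eq_mul_mul_harmonicSum (Nat.zero_lt_of_lt hp) (Nat.zero_lt_of_lt hq),
    mul_comm (p : ℝ≥0∞), mul_assoc]

lemma sumLeft_connectorFun_zero_right (n : ℕ) (L : ℕ∞) :
    sumLeft k connectorFun n 0 L = sumTrunc k connectorFun n 0 L := by
  have h_left (i : ℕ) (hi : n < i) : connectorFun i 0 L = if (i : ℕ∞) < L then 1 else 0 := by
    rw [connectorFun, connector_zero_right (.inl (Nat.ne_zero_of_lt hi))]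
    split_ifs <;> rfl
  have h_trunc (l : ℕ) (hl : 0 < l) : connectorFun n 0 l = if n < l then 1 else 0 := by
    rw [connectorFun, connector_zero_right (.inr (by exact_mod_cast hl.ne'))]
    simp only [Nat.cast_lt]
    split_ifs <;> rfl
  rw [sumLeft_apply, sumTrunc_apply, harmonicSum_congr fun i hi _ => h_left i hi,
    harmonicSum_congr fun l hl _ => h_trunc l hl]
  simp only [harmonicSum_eq_tsum_ite, ENat.natCast_lt_top, and_true]
  refine tsum_congr fun i => ?_
  by_cases hn : n < i
  · by_cases hL : (i : ℕ∞) < L <;> simp [hn, hL, Nat.zero_lt_of_lt hn]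
  · simp [hn]

lemma sumRight_connectorFun_zero_left (m : ℕ) (L : ℕ∞) :
    sumRight k connectorFun 0 m L = sumTrunc k connectorFun 0 m L := by
  simpa only [sumLeft_apply, sumRight_apply, sumTrunc_apply, connectorFun, connector_comm 0]
    using sumLeft_connectorFun_zero_right k m L

lemma sumLeft_two_connectorFun : sumLeft 2 connectorFun = sumTrunc 2 connectorFun := by
  refine funext₃ fun n m L => ?_
  rcases m.eq_zero_or_pos with rfl | hm
  · exact sumLeft_connectorFun_zero_right 2 n L
  calc harmonicSum 2 n ⊤ (fun i => connectorFun i m L)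
      = harmonicSum 1 n ⊤ fun i => m * harmonicSum 2 0 L fun l => connectorDiff i m l :=
        harmonicSum_succ_of_eq_mul fun i hi _ => by
          rw [connectorFun, connector_eq_mul_mul_harmonicSum (Nat.zero_lt_of_lt hi) hm, mul_assoc]
    _ = harmonicSum 2 0 L fun l => m * harmonicSum 1 n ⊤ fun i => connectorDiff i m l := by
        simp only [harmonicSum_const_mul]
        rw [harmonicSum_comm]
    _ = harmonicSum 2 0 L fun l => connectorFun n m l :=
        harmonicSum_congr fun l _ _ => (connector_eq_mul_harmonicSum hm n l).symm

lemma sumTrunc_two_connectorDiffFun :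
    sumTrunc 2 connectorDiffFun = sumTrunc 2 connectorFun
      + (fun n m L => n * sumTrunc 3 connectorDiffFun n m L)
      + fun n m L => m * sumTrunc 3 connectorDiffFun n m L := by
  refine funext₃ fun n m L => ?_
  simp only [Pi.add_apply, sumTrunc_apply]
  calc harmonicSum 2 0 L (fun l => connectorDiffFun n m l)
      = harmonicSum 3 0 L (fun l => l * connectorDiffFun n m l) :=
        (harmonicSum_succ_of_eq_mul fun _ _ _ => rfl).symm
    _ = harmonicSum 3 0 L ((fun l : ℕ => l * connectorFun n m l)
          + (fun l : ℕ => n * connectorDiffFun n m l)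
          + fun l : ℕ => m * connectorDiffFun n m l) :=
        harmonicSum_congr fun l hl _ => by
          have := natCast_mul_connectorDiff n m hl
          rw [add_mul, ← add_assoc] at this
          simp only [Pi.add_apply, connectorFun, connectorDiffFun]
          exact_mod_cast this
    _ = _ := by
        rw [harmonicSum_add, harmonicSum_add, harmonicSum_const_mul, harmonicSum_const_mul,
          harmonicSum_succ_of_eq_mul fun _ _ _ => rfl]

lemma sumLeft_three_sumRight_three_connectorFun :
    sumLeft 3 (sumRight 3 connectorFun)
      = sumTrunc 3 (sumRight 3 connectorFun) + sumTrunc 3 (sumLeft 3 connectorFun)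
        + sumTrunc 2 (sumTrunc 2 (sumTrunc 2 connectorFun)) := by
  have h_twos : sumLeft 2 (sumRight 2 (sumTrunc 2 connectorFun))
      = sumTrunc 2 (sumTrunc 2 (sumTrunc 2 connectorFun)) := by
    rw [sumRight_comm_sumTrunc, ← sumLeft_two_connectorFun_eq_sumRight, sumLeft_comm_sumTrunc,
      sumLeft_two_connectorFun, sumLeft_comm_sumTrunc, sumLeft_two_connectorFun]
  calc sumLeft 3 (sumRight 3 connectorFun)
      = sumLeft 2 (sumRight 2 (sumTrunc 2 connectorDiffFun)) :=
        sumLeft_succ_sumRight_succ_connectorFun 2 2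
    _ = sumLeft 2 (sumRight 2 (sumTrunc 2 connectorFun))
          + sumLeft 1 (sumRight 2 (sumTrunc 3 connectorDiffFun))
          + sumLeft 2 (sumRight 1 (sumTrunc 3 connectorDiffFun)) := by
        rw [sumTrunc_two_connectorDiffFun]
        simp only [map_add, sumRight_natCast_mul, sumLeft_succ_natCast_mul,
          sumRight_succ_natCast_mul]
    _ = sumTrunc 2 (sumTrunc 2 (sumTrunc 2 connectorFun))
          + sumTrunc 3 (sumRight 3 connectorFun) + sumTrunc 3 (sumLeft 3 connectorFun) := by
        rw [h_twos, sumRight_succ_connectorFun, sumLeft_succ_connectorFun,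
          ← sumLeft_comm_sumRight]
        simp only [sumRight_comm_sumTrunc, sumLeft_comm_sumTrunc]
    _ = _ := by rw [add_rotate]

end Transport

section Words

/-- The composition of the operators `sumLeft k` over the letters `z_k` of a word, the first letter
being applied last. -/
noncomputable def sumLeftWord (w : List ℕ) : AddMonoid.End (ℕ → ℕ → ℕ∞ → ℝ≥0∞) :=
  (w.map sumLeft).prod

/-- The composition of the operators `sumRight k` over the letters `z_k` of a word, the first
letter being applied last. -/
noncomputable def sumRightWord (w : List ℕ) : AddMonoid.End (ℕ → ℕ → ℕ∞ → ℝ≥0∞) :=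
  (w.map sumRight).prod

/-- The anti-automorphism `τ` on words with letters `z_k`, `2 ≤ k`, which exchanges `x` and `y`; it
sends `z_k` to `z_1 ^ (k - 2) z_2`. -/
def dualWord (w : List ℕ) : List ℕ :=
  w.reverse.flatMap fun k => List.replicate (k - 2) 1 ++ [2]

lemma dualWord_append (u v : List ℕ) : dualWord (u ++ v) = dualWord v ++ dualWord u := by
  simp only [dualWord, List.reverse_append, List.flatMap_append]

lemma dualWord_cons (k : ℕ) (w : List ℕ) : dualWord (k :: w) = dualWord w ++ dualWord [k] :=
  dualWord_append [k] w

lemma dualWord_replicate_two (b : ℕ) :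
    dualWord (List.replicate b 2) = List.replicate b 2 := by
  induction b with
  | zero => rfl
  | succ b ih =>
    rw [List.replicate_succ, dualWord_cons, ih, ← List.replicate_succ, List.replicate_succ']
    rfl

variable (k : ℕ) (u v w : List ℕ) (f g : ℕ → ℕ → ℕ∞ → ℝ≥0∞) {m : ℕ} {L : ℕ∞}

lemma sumLeftWord_cons : sumLeftWord (k :: w) f = sumLeft k (sumLeftWord w f) := rfl

lemma sumRightWord_cons : sumRightWord (k :: w) f = sumRight k (sumRightWord w f) := rfl

lemma sumLeftWord_append : sumLeftWord (u ++ v) f = sumLeftWord u (sumLeftWord v f) := by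
  simp only [sumLeftWord, List.map_append, List.prod_append, AddMonoid.End.coe_mul,
    Function.comp_apply]

lemma sumRightWord_append : sumRightWord (u ++ v) f = sumRightWord u (sumRightWord v f) := by
  simp only [sumRightWord, List.map_append, List.prod_append, AddMonoid.End.coe_mul,
    Function.comp_apply]

lemma sumLeftWord_comm_sumRight :
    sumLeftWord w (sumRight k f) = sumRight k (sumLeftWord w f) := by
  induction w with
  | nil => rfl
  | cons j w ih => rw [sumLeftWord_cons, ih, sumLeft_comm_sumRight, sumLeftWord_cons]

lemma sumLeftWord_comm_sumTrunc :
    sumLeftWord w (sumTrunc k f) = sumTrunc k (sumLeftWord w f) := by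
  induction w with
  | nil => rfl
  | cons j w ih => rw [sumLeftWord_cons, ih, sumLeft_comm_sumTrunc, sumLeftWord_cons]

lemma sumRightWord_comm_sumLeft :
    sumRightWord w (sumLeft k f) = sumLeft k (sumRightWord w f) := by
  induction w with
  | nil => rfl
  | cons j w ih => rw [sumRightWord_cons, ih, ← sumLeft_comm_sumRight, sumRightWord_cons]

lemma sumRightWord_comm_sumTrunc :
    sumRightWord w (sumTrunc k f) = sumTrunc k (sumRightWord w f) := by
  induction w with
  | nil => rfl
  | cons j w ih => rw [sumRightWord_cons, ih, sumRight_comm_sumTrunc, sumRightWord_cons]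

variable {f g} in
lemma sumLeftWord_congr (h : ∀ n, f n m L = g n m L) (n : ℕ) :
    sumLeftWord w f n m L = sumLeftWord w g n m L := by
  induction w generalizing n with
  | nil => exact h n
  | cons k w ih => exact harmonicSum_congr fun i _ _ => ih i

variable {f g} in
lemma sumRightWord_congr {n : ℕ} (h : ∀ m, f n m L = g n m L) (m : ℕ) :
    sumRightWord w f n m L = sumRightWord w g n m L := by
  induction w generalizing m with
  | nil => exact h m
  | cons k w ih => exact harmonicSum_congr fun i _ _ => ih i

lemma sumLeftWord_connectorFun_zero_top (n : ℕ) :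
    sumLeftWord w connectorFun n 0 ⊤ = mzvTail w n := by
  induction w generalizing n with
  | nil =>
    rw [mzvTail, sumLeftWord, List.map_nil, List.prod_nil, AddMonoid.End.coe_one, id_eq,
      connectorFun, connector_zero_right (.inr ENat.top_ne_zero)]
    simp
  | cons k w ih => exact harmonicSum_congr fun i _ _ => ih i

lemma sumRight_succ_connectorFun_top (n m : ℕ) :
    sumRight (k + 1) connectorFun n m ⊤ = sumLeft 1 (sumRight k connectorFun) n m ⊤ := by
  rw [sumRight_succ_connectorFun]
  rfl

lemma sumRight_add_two_connectorFun_top (n m : ℕ) :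
    sumRight (k + 2) connectorFun n m ⊤ = sumLeftWord (dualWord [k + 2]) connectorFun n m ⊤ := by
  induction k generalizing n with
  | zero => exact congr_fun₃ sumLeft_two_connectorFun_eq_sumRight.symm n m ⊤
  | succ k ih =>
    rw [sumRight_succ_connectorFun_top]
    exact harmonicSum_congr fun i _ _ => ih i

lemma sumRightWord_connectorFun_top {w : List ℕ} (hw : ∀ k ∈ w, 2 ≤ k) (n m : ℕ) :
    sumRightWord w connectorFun n m ⊤ = sumLeftWord (dualWord w) connectorFun n m ⊤ := by
  induction w generalizing n m with
  | nil => rfl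
  | cons k w ih =>
    rw [List.forall_mem_cons] at hw
    obtain ⟨k, rfl⟩ := Nat.exists_eq_add_of_le' hw.1
    calc sumRightWord ((k + 2) :: w) connectorFun n m ⊤
        = sumRight (k + 2) (sumLeftWord (dualWord w) connectorFun) n m ⊤ :=
          harmonicSum_congr fun i _ _ => ih hw.2 n i
      _ = sumLeftWord (dualWord w) (sumRight (k + 2) connectorFun) n m ⊤ := by
          rw [sumLeftWord_comm_sumRight]
      _ = sumLeftWord (dualWord w) (sumLeftWord (dualWord [k + 2]) connectorFun) n m ⊤ :=
          sumLeftWord_congr _ (fun i => sumRight_add_two_connectorFun_top k i m) n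
      _ = sumLeftWord (dualWord ((k + 2) :: w)) connectorFun n m ⊤ := by
          rw [dualWord_cons _ w, sumLeftWord_append]

end Words

section ConnectedSum

/-- The connected sum `L ↦ ∑ K(n_r, m_s, L) / (∏ n_i ^ k_i * ∏ m_j ^ l_j)` over all
`0 < n_1 < ⋯ < n_r` and `0 < m_1 < ⋯ < m_s`, where, as for `starAux`, the words
`z_{k_1} ⋯ z_{k_r}` and `z_{l_1} ⋯ z_{l_s}` are reversed. -/
noncomputable def connectedSum (u v : List ℕ) : ℕ∞ → ℝ≥0∞ :=
  sumLeftWord u.reverse (sumRightWord v.reverse connectorFun) 0 0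

variable (k : ℕ) (u v : List ℕ)

lemma connectedSum_cons_left :
    connectedSum (k :: u) v
      = sumLeftWord u.reverse (sumRightWord v.reverse (sumLeft k connectorFun)) 0 0 := by
  rw [connectedSum, List.reverse_cons, sumLeftWord_append, sumRightWord_comm_sumLeft]
  rfl

lemma connectedSum_cons_right :
    connectedSum u (k :: v)
      = sumLeftWord u.reverse (sumRightWord v.reverse (sumRight k connectorFun)) 0 0 := by
  rw [connectedSum, List.reverse_cons, sumRightWord_append]
  rfl

lemma truncSum_connectedSum :
    truncSum k (connectedSum u v)
      = sumLeftWord u.reverse (sumRightWord v.reverse (sumTrunc k connectorFun)) 0 0 := by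
  rw [sumRightWord_comm_sumTrunc, sumLeftWord_comm_sumTrunc]
  rfl

lemma connectedSum_two_cons_left : connectedSum (2 :: u) v = truncSum 2 (connectedSum u v) := by
  rw [connectedSum_cons_left, truncSum_connectedSum, sumLeft_two_connectorFun]

lemma connectedSum_two_cons_right : connectedSum u (2 :: v) = truncSum 2 (connectedSum u v) := by
  rw [connectedSum_cons_right, truncSum_connectedSum, ← sumLeft_two_connectorFun_eq_sumRight,
    sumLeft_two_connectorFun]

lemma connectedSum_three_cons_three_cons :
    connectedSum (3 :: u) (3 :: v) = truncSum 3 (connectedSum u (3 :: v))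
      + truncSum 3 (connectedSum (3 :: u) v)
      + truncSum 2 (truncSum 2 (truncSum 2 (connectedSum u v))) := by
  rw [connectedSum_cons_left, List.reverse_cons, sumRightWord_append]
  change sumLeftWord u.reverse (sumRightWord v.reverse (sumRight 3 (sumLeft 3 connectorFun))) 0 0
    = _
  rw [← sumLeft_comm_sumRight, sumLeft_three_sumRight_three_connectorFun,
    connectedSum_cons_right, connectedSum_cons_left]
  simp only [map_add, sumRightWord_comm_sumTrunc, sumLeftWord_comm_sumTrunc]
  rfl

lemma connectedSum_cons_nil : connectedSum (k :: u) [] = truncSum k (connectedSum u []) := by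
  rw [connectedSum_cons_left, truncSum_connectedSum]
  exact funext fun L => sumLeftWord_congr _ (sumLeft_connectorFun_zero_right k · L) 0

lemma connectedSum_nil_cons : connectedSum [] (k :: v) = truncSum k (connectedSum [] v) := by
  rw [connectedSum_cons_right, truncSum_connectedSum]
  exact funext fun L => sumRightWord_congr _ (sumRight_connectorFun_zero_left k · L) 0

lemma connectedSum_nil_comm : connectedSum u [] = connectedSum [] u := by
  induction u with
  | nil => rfl
  | cons k u ih => rw [connectedSum_cons_nil, connectedSum_nil_cons, ih]

variable {v} in
lemma connectedSum_reverse_top (hv : ∀ k ∈ v, 2 ≤ k) :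
    connectedSum u.reverse v.reverse ⊤ = mzvTail (u ++ dualWord v) 0 := by
  rw [connectedSum, List.reverse_reverse, List.reverse_reverse,
    sumLeftWord_congr _ fun n => sumRightWord_connectorFun_top hv n 0, ← sumLeftWord_append,
    sumLeftWord_connectorFun_zero_top]

end ConnectedSum

section Evaluation

/-- `Evaluates p f` says that `f` is the truncated multiple zeta value `L ↦ connectedSum w []` of
the words `w` of `ℤ⟨z₂,z₃⟩`, extended additively to the sum of words `p`; words are reversed, as
for `starAux`. -/
inductive Evaluates : (List ℕ →₀ ℤ) → (ℕ∞ → ℝ≥0∞) → Prop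
  | single {w : List ℕ} (hw : IsWord23 w) :
      Evaluates (Finsupp.single w 1) (connectedSum w [])
  | add {p q : List ℕ →₀ ℤ} {f g : ℕ∞ → ℝ≥0∞} (hp : Evaluates p f) (hq : Evaluates q g) :
      Evaluates (p + q) (f + g)

lemma isWord23_cons {k : ℕ} {w : List ℕ} : IsWord23 (k :: w) ↔ (k = 2 ∨ k = 3) ∧ IsWord23 w :=
  List.forall_mem_cons

lemma IsWord23.two_le {w : List ℕ} (hw : IsWord23 w) : ∀ k ∈ w, 2 ≤ k := fun k hk => by
  rcases hw k hk with rfl | rfl <;> norm_num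

lemma IsWord23.reverse {w : List ℕ} (hw : IsWord23 w) : IsWord23 w.reverse :=
  fun k hk => hw k (List.mem_reverse.1 hk)

variable {u v : List ℕ} {p : List ℕ →₀ ℤ} {f : ℕ∞ → ℝ≥0∞}

lemma Evaluates.mapDomain_cons {k : ℕ} (hk : k = 2 ∨ k = 3) (h : Evaluates p f) :
    Evaluates (Finsupp.mapDomain (k :: ·) p) (truncSum k f) := by
  induction h with
  | single hw =>
    rw [Finsupp.mapDomain_single, ← connectedSum_cons_nil]
    exact .single (isWord23_cons.2 ⟨hk, hw⟩)
  | add _ _ hp hq =>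
    rw [Finsupp.mapDomain_add, map_add]
    exact hp.add hq

lemma Evaluates.mapDomain_two_cons (h : Evaluates p f) :
    Evaluates (Finsupp.mapDomain (2 :: ·) p) (truncSum 2 f) :=
  h.mapDomain_cons (.inl rfl)

lemma Evaluates.mapDomain_three_cons (h : Evaluates p f) :
    Evaluates (Finsupp.mapDomain (3 :: ·) p) (truncSum 3 f) :=
  h.mapDomain_cons (.inr rfl)

lemma evaluates_starAux (hu : IsWord23 u) (hv : IsWord23 v) :
    Evaluates (starAux u v) (connectedSum u v) := by
  induction u generalizing v with
  | nil =>
    rw [starAux_nil_left, ← connectedSum_nil_comm]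
    exact .single hv
  | cons k u ihu =>
    obtain ⟨rfl | rfl, hu'⟩ := isWord23_cons.1 hu
    · rw [starAux_two_cons_left, connectedSum_two_cons_left]
      exact (ihu hu' hv).mapDomain_two_cons
    induction v with
    | nil =>
      rw [starAux_nil_right]
      exact .single hu
    | cons l v ihv =>
      obtain ⟨rfl | rfl, hv'⟩ := isWord23_cons.1 hv
      · rw [starAux_two_cons_right, connectedSum_two_cons_right]
        exact (ihv hv').mapDomain_two_cons
      · have h_twos := (ihu hu' hv').mapDomain_two_cons.mapDomain_two_cons.mapDomain_two_cons
        rw [← Finsupp.mapDomain_comp, ← Finsupp.mapDomain_comp] at h_twos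
        rw [starAux_three_cons_three_cons, connectedSum_three_cons_three_cons]
        exact ((ihu hu' hv).mapDomain_three_cons.add (ihv hv').mapDomain_three_cons).add h_twos

lemma connectedSum_nil_right_top (w : List ℕ) : connectedSum w [] ⊤ = mzvTail w.reverse 0 :=
  sumLeftWord_connectorFun_zero_top w.reverse 0

lemma Evaluates.apply_top_ne_top (h : Evaluates p f) : f ⊤ ≠ ⊤ := by
  induction h with
  | single hw =>
    rw [connectedSum_nil_right_top]
    exact mzvTail_ne_top hw.reverse.two_le 0
  | add _ _ hf hg => exact ENNReal.add_ne_top.2 ⟨hf, hg⟩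

lemma Evaluates.toReal_apply_top (h : Evaluates p f) :
    (f ⊤).toReal = Finsupp.linearCombination ℤ (fun w => mzv w.reverse) p := by
  induction h with
  | single hw =>
    rw [connectedSum_nil_right_top, Finsupp.linearCombination_single, one_smul,
      mzv_eq_toReal_mzvTail]
  | add hp hq ihp ihq =>
    rw [Pi.add_apply, ENNReal.toReal_add hp.apply_top_ne_top hq.apply_top_ne_top, ihp, ihq,
      map_add]

theorem mzv_append_dualWord (hu : IsWord23 u) (hv : IsWord23 v) :
    mzv (u ++ dualWord v) = Finsupp.linearCombination ℤ mzv (starW u v) := by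
  rw [mzv_eq_toReal_mzvTail, ← connectedSum_reverse_top u hv.two_le,
    (evaluates_starAux hu.reverse hv.reverse).toReal_apply_top, starW,
    Finsupp.linearCombination_mapDomain]
  rfl

lemma isWord23_append : IsWord23 (u ++ v) ↔ IsWord23 u ∧ IsWord23 v :=
  List.forall_mem_append

lemma isWord23_replicate_two (a : ℕ) : IsWord23 (List.replicate a 2) :=
  fun _ hk => .inl (List.eq_of_mem_replicate hk)

lemma isWord23_three : IsWord23 [3] := fun _ hk => .inr (List.mem_singleton.1 hk)

end Evaluation

/-- Specializing `Z(w₁ τ(w₂)) = Z(w₁ ⋆ w₂)` to `w₁ = z₂^{a-1} z₃ z₂^{c-1}`,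
`w₂ = z₂^{b-1} z₃` : the purely algebraic ⋆-product identity
`z₂^{a−1} z₃ z₂^{c−1} ⋆ z₂^{b−1} z₃
  = z₂^{a+b+c} + z₂^{a−1} z₃ z₂^{b−1} z₃ z₂^{c−1} + z₂^{b−1} z₃ z₂^{a−1} z₃ z₂^{c−1}`,
and the resulting MZV identity
`ζ({2}^{a−1},3,{2}^{c−1},1,{2}^b) = ζ({2}^{a+b+c}) + ζ({2}^{a−1},3,{2}^{b−1},3,{2}^{c−1})
  + ζ({2}^{b−1},3,{2}^{a−1},3,{2}^{c−1})`. -/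
theorem star_specialization (a b c : ℕ) (ha : 0 < a) (hb : 0 < b) (hc : 0 < c) :
    starW (List.replicate (a - 1) 2 ++ [3] ++ List.replicate (c - 1) 2)
        (List.replicate (b - 1) 2 ++ [3])
      = Finsupp.single (List.replicate (a + b + c) 2) 1
        + Finsupp.single (List.replicate (a - 1) 2 ++ [3] ++ List.replicate (b - 1) 2
            ++ [3] ++ List.replicate (c - 1) 2) 1
        + Finsupp.single (List.replicate (b - 1) 2 ++ [3] ++ List.replicate (a - 1) 2
            ++ [3] ++ List.replicate (c - 1) 2) 1
    ∧ mzv (List.replicate (a - 1) 2 ++ [3] ++ List.replicate (c - 1) 2 ++ [1] ++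
          List.replicate b 2)
        = mzv (List.replicate (a + b + c) 2)
          + mzv (List.replicate (a - 1) 2 ++ [3] ++ List.replicate (b - 1) 2 ++ [3] ++
              List.replicate (c - 1) 2)
          + mzv (List.replicate (b - 1) 2 ++ [3] ++ List.replicate (a - 1) 2 ++ [3] ++
              List.replicate (c - 1) 2) := by
  obtain ⟨a, rfl⟩ := Nat.exists_eq_add_one_of_ne_zero ha.ne'
  obtain ⟨b, rfl⟩ := Nat.exists_eq_add_one_of_ne_zero hb.ne'
  obtain ⟨c, rfl⟩ := Nat.exists_eq_add_one_of_ne_zero hc.ne'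
  simp only [Nat.add_sub_cancel]
  have h_star := starW_replicate_three_replicate a b c
  have hu : IsWord23 (List.replicate a 2 ++ [3] ++ List.replicate c 2) := by
    simp only [isWord23_append, isWord23_replicate_two, isWord23_three, and_self]
  have hv : IsWord23 (List.replicate b 2 ++ [3]) := by
    simp only [isWord23_append, isWord23_replicate_two, isWord23_three, and_self]
  have h_dual : dualWord (List.replicate b 2 ++ [3]) = [1] ++ List.replicate (b + 1) 2 := by
    rw [dualWord_append, dualWord_replicate_two]
    rfl
  refine ⟨h_star, ?_⟩
  rw [List.append_assoc _ [1], ← h_dual, mzv_append_dualWord hu hv, h_star]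
  simp only [map_add, Finsupp.linearCombination_single, one_smul]
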